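/- Let F = FreeGroup (Fin q), A = FreeAlgebra ℚ (Fin q) with generators X_1, …, X_q, I the two-sided ideal generated by the X_i, and A_m = A ⧸ I^m. Let θ : F → A_mˣ be any group homomorphism such that for every i the element θ(x_i) − 1 − X_i lies in the image of I² in A_m (i.e., θ is a Magnus expansion modulo I^m). Then there exists a ℚ-algebra automorphism S of A_m such that M_m(g) = S(θ(g)) in A_m for every g ∈ F, where M_m is the standard Magnus expansion sending x_i to 1 + X_i. -/

import Mathlib

/-!
A Magnus expansion `θ` determines an algebra endomorphism `T` of the truncated algebra with
`T (1 + X_i) = θ x_i`: it exists because the elements `θ x_i - 1` lie in the nilpotent ideal `J`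
generated by the `X_i`. Since `T` is the identity on generators modulo `J ^ 2`, the difference
`T - 1` raises the `J`-adic filtration by one, so it is nilpotent and `T` is invertible. Two
expansions `θ` and `θ'` then differ by `T' ∘ T⁻¹`.
-/

noncomputable section

/-- The two-sided ideal of the free algebra `ℚ⟨X_1, …, X_q⟩` generated by the
generators `X_1, …, X_q`, as a ℚ-submodule. -/
def magnusIdeal (q : ℕ) : Submodule ℚ (FreeAlgebra ℚ (Fin q)) :=
  ⊤ * Submodule.span ℚ (Set.range (FreeAlgebra.ι ℚ)) * ⊤

/-- Congruence modulo `I^m`. -/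
def magnusRel (q m : ℕ) (a b : FreeAlgebra ℚ (Fin q)) : Prop :=
  a - b ∈ magnusIdeal q ^ m

/-- The truncated algebra `A_m = ℚ⟨X_1, …, X_q⟩ ⧸ I^m`. -/
abbrev MagnusQuot (q m : ℕ) := RingQuot (magnusRel q m)

/-- The quotient map `A → A_m`. -/
def magnusMk (q m : ℕ) : FreeAlgebra ℚ (Fin q) →ₐ[ℚ] MagnusQuot q m :=
  RingQuot.mkAlgHom ℚ (magnusRel q m)

section TwoSidedSpan

variable {R B C : Type*} [CommSemiring R] [Semiring B] [Algebra R B] [Semiring C] [Algebra R C]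

variable (R) in
/-- The two-sided ideal generated by `s`, encoded as an `R`-submodule so that its powers and its
images under algebra homomorphisms are those of the semiring `Submodule R B`; in particular its
zeroth power is the image of `R`, not the whole algebra. -/
def twoSidedSpan (s : Set B) : Submodule R B :=
  ⊤ * Submodule.span R s * ⊤

theorem submodule_top_mul_top : (⊤ * ⊤ : Submodule R B) = ⊤ :=
  top_le_iff.mp (le_mul_of_one_le_right' le_top)

theorem top_mul_twoSidedSpan (s : Set B) : ⊤ * twoSidedSpan R s = twoSidedSpan R s := by
  rw [twoSidedSpan, ← mul_assoc, ← mul_assoc, submodule_top_mul_top]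

theorem twoSidedSpan_mul_top (s : Set B) : twoSidedSpan R s * ⊤ = twoSidedSpan R s := by
  rw [twoSidedSpan, mul_assoc, submodule_top_mul_top]

theorem span_le_twoSidedSpan (s : Set B) : Submodule.span R s ≤ twoSidedSpan R s :=
  (le_mul_of_one_le_left' le_top).trans (le_mul_of_one_le_right' le_top)

theorem subset_twoSidedSpan (s : Set B) : s ⊆ twoSidedSpan R s :=
  Submodule.subset_span.trans (span_le_twoSidedSpan s)

theorem twoSidedSpan_sq_le (s : Set B) : twoSidedSpan R s ^ 2 ≤ twoSidedSpan R s :=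
  calc twoSidedSpan R s ^ 2 = twoSidedSpan R s * twoSidedSpan R s := sq _
    _ ≤ ⊤ * twoSidedSpan R s := by gcongr; exact le_top
    _ = twoSidedSpan R s := top_mul_twoSidedSpan s

theorem twoSidedSpan_le_of_subset {s t : Set B} (h : s ⊆ twoSidedSpan R t) :
    twoSidedSpan R s ≤ twoSidedSpan R t :=
  calc ⊤ * Submodule.span R s * ⊤ ≤ ⊤ * twoSidedSpan R t * ⊤ := by
        gcongr; exact Submodule.span_le.mpr h
    _ = twoSidedSpan R t := by rw [top_mul_twoSidedSpan, twoSidedSpan_mul_top]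

theorem map_twoSidedSpan_le (f : B →ₐ[R] C) (s : Set B) :
    (twoSidedSpan R s).map f.toLinearMap ≤ twoSidedSpan R (f '' s) := by
  rw [twoSidedSpan, Submodule.map_mul, Submodule.map_mul, Submodule.map_span]
  exact mul_le_mul' (mul_le_mul' le_top le_rfl) le_top

theorem map_twoSidedSpan {f : B →ₐ[R] C} (hf : Function.Surjective f) (s : Set B) :
    (twoSidedSpan R s).map f.toLinearMap = twoSidedSpan R (f '' s) := by
  have map_top : (⊤ : Submodule R B).map f.toLinearMap = ⊤ := by
    rwa [Submodule.map_top, LinearMap.range_eq_top]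
  rw [twoSidedSpan, Submodule.map_mul, Submodule.map_mul, Submodule.map_span, map_top]
  rfl

end TwoSidedSpan

section UnipotentEndomorphism

variable {R B : Type*} [CommRing R] [Ring B] [Algebra R B]

theorem map_mul_sub_mul (T : B →ₐ[R] B) (a b : B) :
    T (a * b) - a * b = (T a - a) * T b + a * (T b - b) := by
  rw [map_mul, sub_mul, mul_sub, sub_add_sub_cancel]

theorem map_sub_one_mul_le (T : B →ₐ[R] B) (P Q : Submodule R B) :
    (P * Q).map (T.toLinearMap - 1) ≤
      P.map (T.toLinearMap - 1) * Q.map T.toLinearMap + P * Q.map (T.toLinearMap - 1) := by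
  refine Submodule.map_le_iff_le_comap.mpr (Submodule.mul_le.mpr fun a ha b hb => ?_)
  have sub_one_apply_mul : (T.toLinearMap - 1) (a * b) = (T a - a) * T b + a * (T b - b) :=
    map_mul_sub_mul T a b
  rw [Submodule.mem_comap, sub_one_apply_mul]
  exact Submodule.add_mem_sup
    (Submodule.mul_mem_mul (Submodule.mem_map_of_mem ha) (Submodule.mem_map_of_mem hb))
    (Submodule.mul_mem_mul ha (Submodule.mem_map_of_mem hb))

theorem map_le_of_map_sub_one_le {M : Type*} [AddCommGroup M] [Module R M]
    {T : Module.End R M} {P Q : Submodule R M} (hPQ : P ≤ Q)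
    (h : P.map (T - 1) ≤ Q) : P.map T ≤ Q := by
  rintro _ ⟨b, hb, rfl⟩
  simpa using Q.add_mem (h (Submodule.mem_map_of_mem hb)) (hPQ hb)

variable {s : Set B} {T : B →ₐ[R] B}

theorem map_sub_one_top_le_twoSidedSpan (hs : Algebra.adjoin R s = ⊤)
    (hT : ∀ x ∈ s, T x - x ∈ twoSidedSpan R s) :
    (⊤ : Submodule R B).map (T.toLinearMap - 1) ≤ twoSidedSpan R s := by
  rintro _ ⟨b, -, rfl⟩
  change T b - b ∈ twoSidedSpan R s
  have hb : b ∈ Algebra.adjoin R s := hs ▸ Algebra.mem_top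
  induction hb using Algebra.adjoin_induction with
  | mem x hx => exact hT x hx
  | algebraMap r => simp
  | add a b _ _ ha hb =>
    rw [map_add, add_sub_add_comm]
    exact Submodule.add_mem _ ha hb
  | mul a b _ _ ha hb =>
    rw [map_mul_sub_mul]
    refine Submodule.add_mem _ ?_ ?_
    · exact twoSidedSpan_mul_top (R := R) s ▸ Submodule.mul_mem_mul ha Submodule.mem_top
    · exact top_mul_twoSidedSpan (R := R) s ▸ Submodule.mul_mem_mul Submodule.mem_top hb

theorem map_sub_one_twoSidedSpan_le_sq (hs : Algebra.adjoin R s = ⊤)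
    (hT : ∀ x ∈ s, T x - x ∈ twoSidedSpan R s ^ 2) :
    (twoSidedSpan R s).map (T.toLinearMap - 1) ≤ twoSidedSpan R s ^ 2 := by
  set J := twoSidedSpan R s
  set V := Submodule.span R s with hV
  set N := T.toLinearMap - 1
  have top_mul_J : ⊤ * J = J := top_mul_twoSidedSpan s
  have J_mul_top : J * ⊤ = J := twoSidedSpan_mul_top s
  have N_top : (⊤ : Submodule R B).map N ≤ J :=
    map_sub_one_top_le_twoSidedSpan hs fun x hx => twoSidedSpan_sq_le s (hT x hx)
  have N_V : V.map N ≤ J ^ 2 := by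
    rw [hV, Submodule.map_span, Submodule.span_le]
    rintro _ ⟨x, hx, rfl⟩
    exact hT x hx
  have T_V : V.map T.toLinearMap ≤ J :=
    map_le_of_map_sub_one_le (span_le_twoSidedSpan s) (N_V.trans (twoSidedSpan_sq_le s))
  have N_top_mul_V : (⊤ * V).map N ≤ J ^ 2 :=
    calc (⊤ * V).map N
        ≤ (⊤ : Submodule R B).map N * V.map T.toLinearMap + ⊤ * V.map N :=
          map_sub_one_mul_le T ⊤ V
      _ ≤ J * J + ⊤ * J ^ 2 := by gcongr
      _ = J ^ 2 := by rw [sq, ← mul_assoc, top_mul_J, add_idem]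
  calc J.map N
      ≤ (⊤ * V).map N * (⊤ : Submodule R B).map T.toLinearMap
          + ⊤ * V * (⊤ : Submodule R B).map N :=
        map_sub_one_mul_le T (⊤ * V) ⊤
    _ ≤ J ^ 2 * ⊤ + ⊤ * J * J := by
        gcongr
        · exact le_top
        · exact span_le_twoSidedSpan s
    _ = J ^ 2 := by rw [sq, mul_assoc, J_mul_top, top_mul_J, add_idem]

/-- The powers of the ideal are multiplied by `⊤` so that the case `k = 0` is the whole algebra. -/
theorem map_sub_one_top_mul_pow_le (hs : Algebra.adjoin R s = ⊤)
    (hT : ∀ x ∈ s, T x - x ∈ twoSidedSpan R s ^ 2) (k : ℕ) :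
    (⊤ * twoSidedSpan R s ^ k).map (T.toLinearMap - 1) ≤ ⊤ * twoSidedSpan R s ^ (k + 1) := by
  set J := twoSidedSpan R s
  set N := T.toLinearMap - 1
  have N_J : J.map N ≤ J ^ 2 := map_sub_one_twoSidedSpan_le_sq hs hT
  have T_J : J.map T.toLinearMap ≤ J :=
    map_le_of_map_sub_one_le le_rfl (N_J.trans (twoSidedSpan_sq_le s))
  induction k with
  | zero =>
    rw [pow_zero, mul_one, zero_add, pow_one, top_mul_twoSidedSpan]
    exact map_sub_one_top_le_twoSidedSpan hs fun x hx => twoSidedSpan_sq_le s (hT x hx)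
  | succ k ih =>
    calc (⊤ * J ^ (k + 1)).map N
        = (⊤ * J ^ k * J).map N := by rw [pow_succ, mul_assoc]
      _ ≤ (⊤ * J ^ k).map N * J.map T.toLinearMap + ⊤ * J ^ k * J.map N :=
          map_sub_one_mul_le T (⊤ * J ^ k) J
      _ ≤ ⊤ * J ^ (k + 1) * J + ⊤ * J ^ k * J ^ 2 := by gcongr
      _ = ⊤ * J ^ (k + 1 + 1) := by
          rw [mul_assoc, mul_assoc, ← pow_succ, ← pow_add, add_idem]

theorem isNilpotent_sub_one_of_sub_mem_twoSidedSpan_sq (hs : Algebra.adjoin R s = ⊤)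
    (hnil : IsNilpotent (twoSidedSpan R s))
    (hT : ∀ x ∈ s, T x - x ∈ twoSidedSpan R s ^ 2) :
    IsNilpotent (T.toLinearMap - 1 : Module.End R B) := by
  set N : Module.End R B := T.toLinearMap - 1
  have N_pow_top (k : ℕ) (b : B) : (N ^ k) b ∈ ⊤ * twoSidedSpan R s ^ k := by
    induction k with
    | zero => simp
    | succ k ih =>
      rw [pow_succ' N, Module.End.mul_apply]
      exact map_sub_one_top_mul_pow_le hs hT k (Submodule.mem_map_of_mem ih)
  obtain ⟨n, hn⟩ := hnil
  refine ⟨n, LinearMap.ext fun b => ?_⟩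
  simpa [hn] using N_pow_top n b

theorem bijective_of_sub_mem_twoSidedSpan_sq (hs : Algebra.adjoin R s = ⊤)
    (hnil : IsNilpotent (twoSidedSpan R s))
    (hT : ∀ x ∈ s, T x - x ∈ twoSidedSpan R s ^ 2) : Function.Bijective T := by
  have T_isUnit : IsUnit T.toLinearMap := by
    simpa using (isNilpotent_sub_one_of_sub_mem_twoSidedSpan_sq hs hnil hT).isUnit_add_one
  exact (Module.End.isUnit_iff T.toLinearMap).mp T_isUnit

end UnipotentEndomorphism

/-- The free associative algebra on `α` modulo the `m`-th power of the ideal generated by `α`.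
`MagnusQuot q m` is definitionally the case `R = ℚ`, `α = Fin q`. -/
abbrev TruncatedFreeAlgebra (R α : Type*) [CommRing R] (m : ℕ) :=
  RingQuot fun a b : FreeAlgebra R α =>
    a - b ∈ twoSidedSpan R (Set.range (FreeAlgebra.ι R)) ^ m

namespace TruncatedFreeAlgebra

variable (R : Type*) {α B : Type*} [CommRing R] [Ring B] [Algebra R B] (m : ℕ)

variable (α) in
/-- The quotient map from the free algebra. -/
def mk : FreeAlgebra R α →ₐ[R] TruncatedFreeAlgebra R α m :=
  RingQuot.mkAlgHom R _

/-- The class of the generator `X_i`. -/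
def gen (i : α) : TruncatedFreeAlgebra R α m :=
  mk R α m (FreeAlgebra.ι R i)

theorem mk_surjective : Function.Surjective (mk R α m) :=
  RingQuot.mkAlgHom_surjective R _

theorem mk_image_range_ι : mk R α m '' Set.range (FreeAlgebra.ι R) = Set.range (gen R m) :=
  (Set.range_comp _ _).symm

theorem map_mk_twoSidedSpan_pow (k : ℕ) :
    (twoSidedSpan R (Set.range (FreeAlgebra.ι R)) ^ k).map (mk R α m).toLinearMap =
      twoSidedSpan R (Set.range (gen R m)) ^ k := by
  rw [Submodule.map_pow, map_twoSidedSpan (mk_surjective R m), mk_image_range_ι]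

theorem adjoin_range_gen : Algebra.adjoin R (Set.range (gen R m : α → _)) = ⊤ := by
  rw [← mk_image_range_ι, ← AlgHom.map_adjoin, FreeAlgebra.adjoin_range_ι, Algebra.map_top,
    AlgHom.range_eq_top]
  exact mk_surjective R m

theorem twoSidedSpan_range_gen_pow : twoSidedSpan R (Set.range (gen R m : α → _)) ^ m = ⊥ := by
  rw [← map_mk_twoSidedSpan_pow, eq_bot_iff]
  rintro _ ⟨a, ha, rfl⟩
  have mk_eq_mk_zero : mk R α m a = mk R α m 0 :=
    RingQuot.mkAlgHom_rel R (by rwa [sub_zero])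
  simpa using mk_eq_mk_zero

variable {R m}

/-- The homomorphism out of the truncated free algebra given by its universal property among the
algebras with a family of elements that generates an ideal of vanishing `m`-th power. -/
def lift (f : α → B) (hf : twoSidedSpan R (Set.range f) ^ m = ⊥) :
    TruncatedFreeAlgebra R α m →ₐ[R] B :=
  RingQuot.liftAlgHom R ⟨FreeAlgebra.lift R f, fun a b hab => by
    have map_pow_le : (twoSidedSpan R (Set.range (FreeAlgebra.ι R)) ^ m).map
        (FreeAlgebra.lift R f).toLinearMap ≤ ⊥ := by
      rw [Submodule.map_pow, ← hf]
      refine pow_le_pow_left' ((map_twoSidedSpan_le _ _).trans_eq ?_) m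
      rw [← Set.range_comp, FreeAlgebra.ι_comp_lift]
    exact sub_eq_zero.mp (by simpa using map_pow_le (Submodule.mem_map_of_mem hab))⟩

theorem lift_gen (f : α → B) (hf : twoSidedSpan R (Set.range f) ^ m = ⊥) (i : α) :
    lift f hf (gen R m i) = f i := by
  simp [lift, gen, mk]

theorem exists_algEquiv_gen_eq (f : α → TruncatedFreeAlgebra R α m)
    (hf : ∀ i, f i - gen R m i ∈ twoSidedSpan R (Set.range (gen R m)) ^ 2) :
    ∃ T : TruncatedFreeAlgebra R α m ≃ₐ[R] TruncatedFreeAlgebra R α m,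
      ∀ i, T (gen R m i) = f i := by
  set J := twoSidedSpan R (Set.range (gen R m : α → _))
  have f_mem (i : α) : f i ∈ J := by
    simpa using J.add_mem (twoSidedSpan_sq_le _ (hf i)) (subset_twoSidedSpan _ ⟨i, rfl⟩)
  have f_pow : twoSidedSpan R (Set.range f) ^ m = ⊥ := by
    rw [eq_bot_iff, ← twoSidedSpan_range_gen_pow]
    exact pow_le_pow_left' (twoSidedSpan_le_of_subset (Set.range_subset_iff.mpr f_mem)) m
  have lift_bijective : Function.Bijective (lift f f_pow) := by
    refine bijective_of_sub_mem_twoSidedSpan_sq (adjoin_range_gen R m)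
      ⟨m, twoSidedSpan_range_gen_pow R m⟩ ?_
    rintro _ ⟨i, rfl⟩
    rw [lift_gen]
    exact hf i
  exact ⟨AlgEquiv.ofBijective _ lift_bijective, lift_gen f f_pow⟩

/-- A Magnus expansion modulo `I ^ m`: a homomorphism from the free group to the units of the
truncated free algebra with `θ x_i ≡ 1 + X_i` modulo the image of `I ^ 2`. -/
def IsMagnusExpansion (θ : FreeGroup α →* (TruncatedFreeAlgebra R α m)ˣ) : Prop :=
  ∀ i, (θ (FreeGroup.of i) : TruncatedFreeAlgebra R α m) - 1 - gen R m i ∈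
    (twoSidedSpan R (Set.range (FreeAlgebra.ι R)) ^ 2).map (mk R α m).toLinearMap

theorem isMagnusExpansion_of_eq_one_add_gen {θ : FreeGroup α →* (TruncatedFreeAlgebra R α m)ˣ}
    (hθ : ∀ i, (θ (FreeGroup.of i) : TruncatedFreeAlgebra R α m) = 1 + gen R m i) :
    IsMagnusExpansion θ := fun i => by
  rw [hθ, add_sub_cancel_left, sub_self]
  exact Submodule.zero_mem _

theorem IsMagnusExpansion.exists_algEquiv_one_add_gen
    {θ : FreeGroup α →* (TruncatedFreeAlgebra R α m)ˣ} (hθ : IsMagnusExpansion θ) :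
    ∃ T : TruncatedFreeAlgebra R α m ≃ₐ[R] TruncatedFreeAlgebra R α m,
      ∀ i, T (1 + gen R m i) = θ (FreeGroup.of i) := by
  obtain ⟨T, hT⟩ := exists_algEquiv_gen_eq
    (fun i => (θ (FreeGroup.of i) : TruncatedFreeAlgebra R α m) - 1)
    fun i => map_mk_twoSidedSpan_pow R m 2 ▸ hθ i
  exact ⟨T, fun i => by rw [map_add, map_one, hT, add_sub_cancel]⟩

end TruncatedFreeAlgebra

theorem coe_eq_map_of_forall_of {α B C F : Type*} [Monoid B] [Monoid C] [FunLike F B C]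
    [MonoidHomClass F B C] {θ : FreeGroup α →* Bˣ} {θ' : FreeGroup α →* Cˣ} (S : F)
    (h : ∀ i, (θ' (FreeGroup.of i) : C) = S (θ (FreeGroup.of i))) (g : FreeGroup α) :
    (θ' g : C) = S (θ g) := by
  have θ'_eq : θ' = (Units.map (S : B →* C)).comp θ :=
    FreeGroup.ext_hom _ _ fun i => Units.ext (h i)
  rw [θ'_eq]
  rfl

open TruncatedFreeAlgebra in
theorem magnus_expansions_differ_by_automorphism_general {R α : Type*} [CommRing R] {m : ℕ}
    {θ θ' : FreeGroup α →* (TruncatedFreeAlgebra R α m)ˣ}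
    (hθ : IsMagnusExpansion θ) (hθ' : IsMagnusExpansion θ') :
    ∃ S : TruncatedFreeAlgebra R α m ≃ₐ[R] TruncatedFreeAlgebra R α m,
      ∀ g, (θ' g : TruncatedFreeAlgebra R α m) = S (θ g) := by
  obtain ⟨T, hT⟩ := hθ.exists_algEquiv_one_add_gen
  obtain ⟨T', hT'⟩ := hθ'.exists_algEquiv_one_add_gen
  refine ⟨T.symm.trans T', coe_eq_map_of_forall_of _ fun i => ?_⟩
  rw [AlgEquiv.trans_apply, ← hT, ← hT', AlgEquiv.symm_apply_apply]

/-- Remark 4.1(1) (Kawazumi): any Magnus expansion `θ : F → A_mˣ` modulo `I^m`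
(i.e. a group homomorphism with `θ(x_i) - 1 - X_i ∈ I²` for every `i`) differs from the
standard Magnus expansion `M_m : x_i ↦ 1 + X_i` by a ℚ-algebra automorphism `S` of `A_m`:
`M_m(g) = S(θ(g))` for all `g ∈ F`. -/
theorem magnus_expansions_differ_by_automorphism (q m : ℕ)
    (θ : FreeGroup (Fin q) →* (MagnusQuot q m)ˣ)
    (hθ : ∀ i : Fin q, ((θ (FreeGroup.of i) : (MagnusQuot q m)ˣ) : MagnusQuot q m)
            - 1 - magnusMk q m (FreeAlgebra.ι ℚ i) ∈
            (magnusIdeal q ^ 2).map (magnusMk q m).toLinearMap)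
    (M : FreeGroup (Fin q) →* (MagnusQuot q m)ˣ)
    (hM : ∀ i : Fin q, ((M (FreeGroup.of i) : (MagnusQuot q m)ˣ) : MagnusQuot q m)
            = 1 + magnusMk q m (FreeAlgebra.ι ℚ i)) :
    ∃ S : MagnusQuot q m ≃ₐ[ℚ] MagnusQuot q m,
      ∀ g : FreeGroup (Fin q),
        ((M g : (MagnusQuot q m)ˣ) : MagnusQuot q m) =
          S ((θ g : (MagnusQuot q m)ˣ) : MagnusQuot q m) := by
  exact magnus_expansions_differ_by_automorphism_general (R := ℚ) hθ
    (TruncatedFreeAlgebra.isMagnusExpansion_of_eq_one_add_gen hM)
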